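/- Let q > 0 be real, let Lg be a natural number, let w : Fin Lg → Fin 3 be any word in the three generators and ε : Fin Lg → {1, −1} any choice of signs whose sum Σᵢ ε(i) is odd. Set M(q) = ∏ᵢ (R_{w(i)}^{[2,2]}(q))^{ε(i)} (ordered product of the 2×2 matrices and their inverses; each R_i^{[2,2]}(q) has determinant −1, hence is invertible). Then trace(M(q^{−1})) = −trace(M(q)). (This is the relation a_{[2,2]}(q^{−1}) = −a_{[2,2]}(q) for the character-expansion coefficient of any 4-strand braid of odd writhe.) -/

import Mathlib

/-- `[2]_q = q + q^{−1}`. -/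
noncomputable def tw (q : ℝ) : ℝ := q + q⁻¹

/-- `[3]_q = q² + 1 + q^{−2}`. -/
noncomputable def th (q : ℝ) : ℝ := q ^ 2 + 1 + (q⁻¹) ^ 2

/-- `R₁^{[2,2]}(q) = R₃^{[2,2]}(q) = diag(q, −q^{−1})`. -/
noncomputable def R1_22 (q : ℝ) : Matrix (Fin 2) (Fin 2) ℝ :=
  !![q, 0; 0, -q⁻¹]

/-- `R₂^{[2,2]}(q)`. -/
noncomputable def R2_22 (q : ℝ) : Matrix (Fin 2) (Fin 2) ℝ :=
  !![-1 / (q ^ 2 * tw q), -Real.sqrt (th q) / tw q;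
     -Real.sqrt (th q) / tw q, q ^ 2 / tw q]

/-- The `[2,2]`-block of the generator `σ_{i+1}` of `B₄`, `i : Fin 3`
(`R₁^{[2,2]} = R₃^{[2,2]}`). -/
noncomputable def R22 (i : Fin 3) (q : ℝ) : Matrix (Fin 2) (Fin 2) ℝ :=
  if i = 1 then R2_22 q else R1_22 q

/-- The `[2,2]`-block of the braid word `σ_{w(1)}^{ε(1)}⋯σ_{w(L)}^{ε(L)}`: the ordered
product of the matrices `R_{w(i)}^{[2,2]}(q)^{ε(i)}`. -/
noncomputable def M22 (Lg : ℕ) (w : Fin Lg → Fin 3) (ε : Fin Lg → ℤ) (q : ℝ) :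
    Matrix (Fin 2) (Fin 2) ℝ :=
  (List.ofFn fun i : Fin Lg => R22 (w i) q ^ ε i).prod

/-!
Each block `R22 i q` is a symmetric matrix of determinant `-1` with `R22 i q⁻¹ = (R22 i q)⁻¹`.
Inversion and transposition each reverse the order of a product, so replacing `q` by `q⁻¹` turns
the block of any braid word into the transpose of its inverse. For 2×2 matrices
`trace A⁻¹ = (det A)⁻¹ * trace A`, and here `det A` is `-1` to the power of the writhe.
-/

open Matrix

theorem prod_zpow_eq_zpow_sum₀ {ι G : Type*} [CommGroupWithZero G] {a : G} (ha : a ≠ 0)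
    (s : Finset ι) (e : ι → ℤ) : ∏ i ∈ s, a ^ e i = a ^ ∑ i ∈ s, e i := by
  induction s using Finset.cons_induction with
  | empty => simp
  | cons i s hi ih => rw [Finset.prod_cons, Finset.sum_cons, zpow_add₀ ha, ih]

section Matrix

variable {n R : Type*} [Fintype n] [DecidableEq n]

theorem transpose_inv_list_prod [CommRing R] (l : List (Matrix n n R)) :
    l.prod⁻¹ᵀ = (l.map fun A => A⁻¹ᵀ).prod := by
  simp only [list_prod_inv_reverse, transpose_list_prod, List.map_map, List.map_reverse,
    List.reverse_reverse, Function.comp_def]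

theorem det_zpow {K : Type*} [Field K] (A : Matrix n n K) (k : ℤ) :
    (A ^ k).det = A.det ^ k :=
  map_zpow' detMonoidHom (fun B => by simp [det_nonsing_inv]) A k

theorem trace_inv_fin_two [CommRing R] (A : Matrix (Fin 2) (Fin 2) R) :
    A⁻¹.trace = Ring.inverse A.det * A.trace := by
  rw [inv_def, trace_smul, adjugate_fin_two, trace_fin_two_of, trace_fin_two, add_comm,
    smul_eq_mul]

end Matrix

theorem tw_inv (q : ℝ) : tw q⁻¹ = tw q := by
  rw [tw, tw, inv_inv, add_comm]

theorem th_inv (q : ℝ) : th q⁻¹ = th q := by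
  rw [th, th, inv_inv]
  ring

theorem th_nonneg (q : ℝ) : 0 ≤ th q := by
  unfold th
  positivity

theorem tw_sq {q : ℝ} (hq : q ≠ 0) : tw q ^ 2 = th q + 1 := by
  unfold tw th
  field_simp
  ring

theorem tw_ne_zero {q : ℝ} (hq : q ≠ 0) : tw q ≠ 0 := by
  rw [← pow_ne_zero_iff two_ne_zero, tw_sq hq]
  exact (add_pos_of_nonneg_of_pos (th_nonneg q) one_pos).ne'

theorem det_R1_22 {q : ℝ} (hq : q ≠ 0) : (R1_22 q).det = -1 := by
  simp [R1_22, hq]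

theorem det_R2_22 {q : ℝ} (hq : q ≠ 0) : (R2_22 q).det = -1 := by
  have htw := tw_ne_zero hq
  have hsqrt := Real.sq_sqrt (th_nonneg q)
  rw [R2_22, det_fin_two_of]
  field_simp
  rw [hsqrt, tw_sq hq]
  ring

theorem det_R22 (i : Fin 3) {q : ℝ} (hq : q ≠ 0) : (R22 i q).det = -1 := by
  unfold R22
  split_ifs
  exacts [det_R2_22 hq, det_R1_22 hq]

theorem isSymm_R22 (i : Fin 3) (q : ℝ) : (R22 i q).IsSymm := by
  unfold R22
  split_ifs
  · simp [IsSymm.ext_iff, Fin.forall_fin_two, R2_22]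
  · simp [IsSymm.ext_iff, Fin.forall_fin_two, R1_22]

theorem R22_inv_eq_neg_adjugate (i : Fin 3) (q : ℝ) : R22 i q⁻¹ = -(R22 i q).adjugate := by
  unfold R22
  split_ifs
  · have h₀₀ : -1 / (q⁻¹ ^ 2 * tw q) = -(q ^ 2 / tw q) := by field_simp
    have h₁₁ : q⁻¹ ^ 2 / tw q = -(-1 / (q ^ 2 * tw q)) := by field_simp
    rw [R2_22, R2_22, tw_inv, th_inv, adjugate_fin_two_of, h₀₀, h₁₁]
    simp [neg_div]
  · simp [R1_22, adjugate_fin_two_of]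

theorem R22_inv (i : Fin 3) {q : ℝ} (hq : q ≠ 0) : R22 i q⁻¹ = (R22 i q)⁻¹ := by
  rw [R22_inv_eq_neg_adjugate, inv_def, det_R22 i hq]
  simp

theorem M22_inv_eq_transpose_inv {q : ℝ} (hq : q ≠ 0) {L : ℕ} (w : Fin L → Fin 3)
    (ε : Fin L → ℤ) : M22 L w ε q⁻¹ = (M22 L w ε q)⁻¹ᵀ := by
  have hblock (i : Fin L) : R22 (w i) q⁻¹ ^ ε i = (R22 (w i) q ^ ε i)⁻¹ᵀ := by
    rw [R22_inv _ hq, Matrix.inv_zpow, ((isSymm_R22 _ q).zpow _).inv.eq]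
  simp only [M22, transpose_inv_list_prod, List.map_ofFn, Function.comp_def, hblock]

theorem det_M22 {q : ℝ} (hq : q ≠ 0) {L : ℕ} (w : Fin L → Fin 3)
    (ε : Fin L → ℤ) : (M22 L w ε q).det = (-1) ^ ∑ i, ε i := by
  rw [M22, ← coe_detMonoidHom, map_list_prod, List.map_ofFn, List.prod_ofFn]
  simp only [Function.comp_apply, coe_detMonoidHom, det_zpow, det_R22 _ hq]
  exact prod_zpow_eq_zpow_sum₀ (by norm_num) _ ε

theorem stmt15_general {q : ℝ} (hq : q ≠ 0) {L : ℕ} (w : Fin L → Fin 3)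
    (ε : Fin L → ℤ) : (M22 L w ε q⁻¹).trace = (-1) ^ (∑ i, ε i) * (M22 L w ε q).trace := by
  rw [M22_inv_eq_transpose_inv hq, trace_transpose, trace_inv_fin_two, det_M22 hq,
    Ring.inverse_eq_inv', ← _root_.inv_zpow, inv_neg_one]

/-- For any 4-strand braid word of odd writhe, the character-expansion coefficient
`a_{[2,2]} = trace M(q)` satisfies `a_{[2,2]}(q^{−1}) = −a_{[2,2]}(q)`. -/
theorem stmt15 (q : ℝ) (hq : 0 < q) (Lg : ℕ) (w : Fin Lg → Fin 3) (ε : Fin Lg → ℤ)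
    (hε : ∀ i, ε i = 1 ∨ ε i = -1) (hodd : Odd (∑ i, ε i)) :
    Matrix.trace (M22 Lg w ε q⁻¹) = -Matrix.trace (M22 Lg w ε q) := by
  rw [stmt15_general hq.ne', hodd.neg_one_zpow, neg_one_mul]
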